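/- Let n be finite and let L_j, for j < n, be a compact separable LOTS. Assume that all the L_j are not scattered and that at most one of the L_j is second countable. Then Ldim(∏_{j<n} L_j) = n. -/

import Mathlib

open Set Topology

/-- A subset `S` of a topological space is *scattered* iff every nonempty subset `T ⊆ S`
has a point which is isolated in the subspace topology of `T`. -/
def IsScatteredSet {X : Type*} [TopologicalSpace X] (S : Set X) : Prop :=
  ∀ T ⊆ S, T.Nonempty → ∃ x ∈ T, ∃ U : Set X, IsOpen U ∧ U ∩ T = {x}

/-- `X` embeds into a product of `κ` many LOTSes. -/
def EmbedsInLOTSProd (X : Type) [TopologicalSpace X] (κ : Cardinal.{0}) : Prop :=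
  ∃ (ι : Type) (L : ι → Type) (lin : ∀ i, LinearOrder (L i))
    (top : ∀ i, TopologicalSpace (L i)),
    (∀ i, @OrderTopology (L i) (top i) (lin i).toPreorder) ∧ Cardinal.mk ι = κ ∧
      ∃ e : X → ∀ i, L i,
        @Topology.IsEmbedding X (∀ i, L i) _ (@Pi.topologicalSpace ι L top) e

/-- `Ldim₀ X` : the least `κ` such that `X` embeds into a product of `κ` LOTSes. -/
noncomputable def Ldim0 (X : Type) [TopologicalSpace X] : Cardinal.{0} :=
  sInf {κ : Cardinal.{0} | EmbedsInLOTSProd X κ}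

/-- `Ldim X`, the LOTS dimension of `X` : the least `κ` such that every point of `X` has a
neighborhood `U` with `Ldim₀ (closure U) ≤ κ`. -/
noncomputable def Ldim (X : Type) [TopologicalSpace X] : Cardinal.{0} :=
  sInf {κ : Cardinal.{0} | ∀ x : X, ∃ U ∈ nhds x, Ldim0 ↥(closure U) ≤ κ}

/-!
Suppose a product of `n` compact separable LOTS, all but one of them not second countable, embeds
into a product of LOTS `M i`.

A continuous map from a separable LOTS to a metric space distinguishes the endpoints of only
countably many jumps `a ⋖ b`, and a separable LOTS with countably many jumps is second countable.
So, for each of the `n - 1` factors that are not second countable, any continuous map from the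
product to a metrizable space identifies the endpoints of some jump, whatever the remaining
coordinates are. Composing the coordinates of the embedding with maps `M i → ℝ^ℕ` that are at most
two-to-one on the (separable) images, one gets a cube of `2 ^ (n - 1)` points on which each
coordinate of the embedding takes at most two values, for every value `x` of the last factor.

If there are at most `n - 1` coordinates, then by counting the cube over `x` is mapped onto a full
box of pairs. These pairs do not move when `x` varies a little, so that near a nonisolated `x` two
different cubes are mapped into the same box, contradicting injectivity.
-/

open Filter TopologicalSpace Function

section SeparableOrder

variable {L : Type*} [LinearOrder L] [TopologicalSpace L] [OrderTopology L] [SeparableSpace L]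

theorem exists_countable_isCoinitialFor (R : Set L) :
    ∃ t ⊆ R, t.Countable ∧ IsCoinitialFor R t := by
  by_cases hleast : ∃ a, IsLeast R a
  · obtain ⟨a, haR, ha⟩ := hleast
    exact ⟨{a}, singleton_subset_iff.2 haR, countable_singleton a, fun y hy => ⟨a, rfl, ha hy⟩⟩
  have exists_lt : ∀ y ∈ R, ∃ z ∈ R, z < y := by
    intro y hy
    by_contra! h
    exact hleast ⟨y, hy, h⟩
  obtain ⟨D, hDc, hD⟩ := exists_countable_dense L
  choose f hfR hf using fun d : {d ∈ D | ∃ y ∈ R, y < d} => d.2.2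
  have : Countable {d ∈ D | ∃ y ∈ R, y < d} := (hDc.mono (sep_subset _ _)).to_subtype
  refine ⟨range f, range_subset_iff.2 hfR, countable_range f, fun y hy => ?_⟩
  obtain ⟨v, hvR, hvy⟩ := exists_lt y hy
  obtain ⟨u, huR, huv⟩ := exists_lt v hvR
  obtain ⟨d, hdD, hud, hdy⟩ := hD.exists_mem_open isOpen_Ioo ⟨v, huv, hvy⟩
  exact ⟨_, mem_range_self ⟨d, hdD, u, huR, hud⟩, (hf _).le.trans hdy.le⟩

theorem exists_countable_isCofinalFor (R : Set L) :
    ∃ t ⊆ R, t.Countable ∧ IsCofinalFor R t :=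
  exists_countable_isCoinitialFor (L := Lᵒᵈ) R

theorem lindelofSpace_of_separableSpace : LindelofSpace L := by
  refine ⟨isLindelof_of_countable_subcover fun {ι} U hUo hU => ?_⟩
  choose i hi using fun y => mem_iUnion.1 (hU (mem_univ y))
  obtain ⟨D, hDc, hD⟩ := exists_countable_dense L
  choose l hl hlc hlR using fun d => exists_countable_isCoinitialFor {y | Icc y d ⊆ U (i y)}
  choose r hr hrc hrR using fun d => exists_countable_isCofinalFor {y | Icc d y ⊆ U (i y)}
  refine ⟨i '' ⋃ d ∈ D, (l d ∪ r d),
    (hDc.biUnion fun d _ => (hlc d).union (hrc d)).image i, fun y _ => ?_⟩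
  obtain ⟨d, hdD, hd⟩ :=
    hD.inter_nhds_nonempty (ordConnectedComponent_mem_nhds.2 ((hUo _).mem_nhds (hi y)))
  suffices ∃ x ∈ l d ∪ r d, y ∈ U (i x) by
    obtain ⟨x, hx, hyx⟩ := this
    exact mem_biUnion (mem_image_of_mem i (mem_biUnion hdD hx)) hyx
  rcases le_total y d with hyd | hdy
  · obtain ⟨x, hx, hxy⟩ := hlR d (uIcc_of_le hyd ▸ hd : Icc y d ⊆ U (i y))
    exact ⟨x, .inl hx, hl d hx ⟨hxy, hyd⟩⟩
  · obtain ⟨x, hx, hxy⟩ := hrR d (uIcc_of_ge hdy ▸ hd : Icc d y ⊆ U (i y))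
    exact ⟨x, .inr hx, hr d hx ⟨hdy, hxy⟩⟩

end SeparableOrder

section SecondCountable

theorem secondCountableTopology_of_forall_exists_mem_nhds {X : Type*} [TopologicalSpace X]
    [LindelofSpace X] (h : ∀ x : X, ∃ s ∈ 𝓝 x, SecondCountableTopology s) :
    SecondCountableTopology X := by
  choose s hs hsc using h
  obtain ⟨t, htc, ht⟩ := countable_cover_nhds_interior hs
  have : Countable t := htc.to_subtype
  have (x : t) : SecondCountableTopology (interior (s x)) :=
    (Topology.IsEmbedding.inclusion interior_subset).secondCountableTopology
  exact secondCountableTopology_of_countable_cover (U := fun x : t => interior (s x))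
    (fun _ => isOpen_interior) (by rwa [← biUnion_eq_iUnion t fun x _ => interior (s x)])

variable {L : Type*} [LinearOrder L] [TopologicalSpace L] [OrderTopology L]

theorem exists_forall_mem_nhds_not_secondCountableTopology [SeparableSpace L]
    (h : ¬ SecondCountableTopology L) : ∃ x : L, ∀ s ∈ 𝓝 x, ¬ SecondCountableTopology s := by
  have : LindelofSpace L := lindelofSpace_of_separableSpace
  by_contra! hloc
  exact h (secondCountableTopology_of_forall_exists_mem_nhds hloc)

theorem secondCountableTopology_of_forall_lt_exists {s : Set L} (hs : s.Countable)
    (hl : ∀ a b, a < b → ∃ d ∈ s, a ≤ d ∧ d < b) (hr : ∀ a b, a < b → ∃ d ∈ s, a < d ∧ d ≤ b) :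
    SecondCountableTopology L := by
  refine ⟨⟨Ioi '' s ∪ Iio '' s, (hs.image _).union (hs.image _), ?_⟩⟩
  refine (OrderTopology.topology_eq_generate_intervals (α := L)).trans
    (le_antisymm (generateFrom_anti ?_) (le_generateFrom ?_))
  · rintro _ (⟨a, -, rfl⟩ | ⟨a, -, rfl⟩)
    exacts [⟨a, .inl rfl⟩, ⟨a, .inr rfl⟩]
  let _ := generateFrom (Ioi '' s ∪ Iio '' s)
  rintro _ ⟨a, rfl | rfl⟩
  · have : Ioi a = ⋃ d ∈ s ∩ Ici a, Ioi d := by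
      refine Subset.antisymm (fun x hx => ?_) (iUnion₂_subset fun d hd => Ioi_subset_Ioi hd.2)
      obtain ⟨d, hds, had, hdx⟩ := hl a x hx
      exact mem_biUnion (⟨hds, had⟩ : d ∈ s ∩ Ici a) hdx
    rw [this]
    exact isOpen_biUnion fun d hd => .basic _ (.inl (mem_image_of_mem _ hd.1))
  · have : Iio a = ⋃ d ∈ s ∩ Iic a, Iio d := by
      refine Subset.antisymm (fun x hx => ?_) (iUnion₂_subset fun d hd => Iio_subset_Iio hd.2)
      obtain ⟨d, hds, hxd, hda⟩ := hr x a hx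
      exact mem_biUnion (⟨hds, hda⟩ : d ∈ s ∩ Iic a) hxd
    rw [this]
    exact isOpen_biUnion fun d hd => .basic _ (.inr (mem_image_of_mem _ hd.1))

theorem secondCountableTopology_of_countable_covBy [SeparableSpace L]
    (h : {q : L × L | q.1 ⋖ q.2}.Countable) : SecondCountableTopology L := by
  obtain ⟨D, hDc, hD⟩ := exists_countable_dense L
  let S := {q : L × L | q.1 ⋖ q.2}
  have exists_between {a b : L} (hab : a < b) (hcov : ¬ a ⋖ b) : ∃ d ∈ D, a < d ∧ d < b :=
    hD.exists_mem_open isOpen_Ioo (exists_lt_lt_of_not_covBy hab hcov)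
  refine secondCountableTopology_of_forall_lt_exists (s := D ∪ (Prod.fst '' S ∪ Prod.snd '' S))
    (hDc.union ((h.image _).union (h.image _))) (fun a b hab => ?_) fun a b hab => ?_
  all_goals by_cases hcov : a ⋖ b
  · exact ⟨a, .inr (.inl ⟨(a, b), hcov, rfl⟩), le_rfl, hab⟩
  · obtain ⟨d, hdD, had, hdb⟩ := exists_between hab hcov
    exact ⟨d, .inl hdD, had.le, hdb⟩
  · exact ⟨b, .inr (.inr ⟨(a, b), hcov, rfl⟩), hab, le_rfl⟩
  · obtain ⟨d, hdD, had, hdb⟩ := exists_between hab hcov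
    exact ⟨d, .inl hdD, had, hdb.le⟩

end SecondCountable

section Jumps

variable {L Y Z : Type*} [LinearOrder L] [TopologicalSpace L] [OrderTopology L]

theorem countable_covBy_le_dist [LindelofSpace L] [PseudoMetricSpace Y] {f : L → Y}
    (hf : Continuous f) {ε : ℝ} (hε : 0 < ε) :
    {q : L × L | q.1 ⋖ q.2 ∧ ε ≤ dist (f q.1) (f q.2)}.Countable := by
  let U (x : L) : Set L := ordConnectedComponent (f ⁻¹' Metric.ball (f x) (ε / 2)) x
  have hU (x : L) : U x ∈ 𝓝 x :=
    ordConnectedComponent_mem_nhds.2 (hf.continuousAt (Metric.ball_mem_nhds _ (half_pos hε)))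
  have dist_lt {x a b : L} (ha : a ∈ U x) (hb : b ∈ U x) : dist (f a) (f b) < ε := by
    have hUx : U x ⊆ f ⁻¹' Metric.ball (f x) (ε / 2) := ordConnectedComponent_subset
    have hax : dist (f a) (f x) < ε / 2 := hUx ha
    have hbx : dist (f b) (f x) < ε / 2 := hUx hb
    linarith [dist_triangle_right (f a) (f b) (f x)]
  obtain ⟨t, htc, ht⟩ := countable_cover_nhds hU
  suffices ∀ x, {q : L × L | (q.1 ⋖ q.2 ∧ ε ≤ dist (f q.1) (f q.2)) ∧ q.1 ∈ U x}.Subsingleton by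
    refine (htc.biUnion fun x _ => (this x).countable).mono fun q hq => ?_
    obtain ⟨x, hx, hqx⟩ := mem_iUnion₂.1 (ht.ge (mem_univ q.1))
    exact mem_biUnion hx ⟨hq, hqx⟩
  intro x
  -- Of two such jumps in the convex set `U x`, the lower one would lie inside `U x`.
  have not_lt {q q' : L × L} (hq : q.1 ⋖ q.2 ∧ ε ≤ dist (f q.1) (f q.2)) (hqx : q.1 ∈ U x)
      (hqx' : q'.1 ∈ U x) : ¬ q.1 < q'.1 := fun hlt =>
    (dist_lt hqx (OrdConnected.out inferInstance hqx hqx' ⟨hq.1.le, hq.1.ge_of_gt hlt⟩)).not_ge hq.2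
  rintro ⟨a, b⟩ ⟨hq, hqx⟩ ⟨a', b'⟩ ⟨hq', hqx'⟩
  obtain rfl : a = a' := le_antisymm (le_of_not_gt (not_lt hq' hqx' hqx))
    (le_of_not_gt (not_lt hq hqx hqx'))
  exact Prod.ext rfl (hq.1.unique_right hq'.1)

theorem countable_covBy_ne [LindelofSpace L] [MetricSpace Y] {f : L → Y} (hf : Continuous f) :
    {q : L × L | q.1 ⋖ q.2 ∧ f q.1 ≠ f q.2}.Countable := by
  refine (countable_iUnion fun n : ℕ => countable_covBy_le_dist hf (ε := 1 / (n + 1))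
    Nat.one_div_pos_of_nat).mono ?_
  rintro q ⟨hq, hne⟩
  obtain ⟨n, hn⟩ := exists_nat_one_div_lt (dist_pos.2 hne)
  exact mem_iUnion.2 ⟨n, hq, hn.le⟩

theorem exists_covBy_eq_of_not_secondCountableTopology [SeparableSpace L]
    [TopologicalSpace Y] [MetrizableSpace Y] [TopologicalSpace Z] [CompactSpace Z]
    (hL : ¬ SecondCountableTopology L) {f : L → Z → Y} (hf : Continuous (uncurry f)) :
    ∃ a b, a ⋖ b ∧ f a = f b := by
  have : LindelofSpace L := lindelofSpace_of_separableSpace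
  let _ := metrizableSpaceMetric Y
  let F : C(L, C(Z, Y)) := ContinuousMap.curry (⟨uncurry f, hf⟩ : C(L × Z, Y))
  by_contra! hne
  have hsub : {q : L × L | q.1 ⋖ q.2} ⊆ {q | q.1 ⋖ q.2 ∧ F q.1 ≠ F q.2} :=
    fun q hq => ⟨hq, fun hF => hne q.1 q.2 hq (congrArg DFunLike.coe hF)⟩
  exact hL (secondCountableTopology_of_countable_covBy
    ((countable_covBy_ne F.continuous).mono hsub))

end Jumps

section Triples

variable {M X Y A : Type*} [LinearOrder M]

/-- The map `φ` separates the endpoints of every three-element chain of `C`. Equivalently, two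
points of `C` with the same image are neighbours in `C`, so that `φ` is at most two-to-one on `C`;
this is how close to injective a map from a separable `C` into a metrizable space can be made. -/
def SeparatesTriplesOn (φ : M → Y) (C : Set M) : Prop :=
  ∀ ⦃u⦄, u ∈ C → ∀ ⦃v⦄, v ∈ C → ∀ ⦃w⦄, w ∈ C → u < v → v < w → φ u ≠ φ w

namespace SeparatesTriplesOn

variable {φ : M → Y} {C : Set M}

theorem eq_or_eq (h : SeparatesTriplesOn φ C) {u v w : M} (hu : u ∈ C) (hv : v ∈ C) (hw : w ∈ C)
    (huv : φ u = φ v) (huw : φ u = φ w) (hne : u ≠ v) : w = u ∨ w = v := by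
  by_contra! hne'
  rcases lt_or_gt_of_ne hne with h₁ | h₁ <;> rcases lt_or_gt_of_ne hne'.1 with h₂ | h₂ <;>
    rcases lt_or_gt_of_ne hne'.2 with h₃ | h₃ <;> grind [SeparatesTriplesOn]

theorem card_le_two (h : SeparatesTriplesOn φ C) {S : Finset M} (hSC : ∀ u ∈ S, u ∈ C)
    (hφ : ∀ u ∈ S, ∀ v ∈ S, φ u = φ v) : S.card ≤ 2 := by
  by_contra! hcard
  obtain ⟨u, v, w, hu, hv, hw, huv, huw, hvw⟩ := Finset.two_lt_card_iff.1 hcard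
  rcases h.eq_or_eq (hSC u hu) (hSC v hv) (hSC w hw) (hφ u hu v hv) (hφ u hu w hw) huv with e | e
  exacts [huw e.symm, hvw e.symm]

variable [TopologicalSpace M] [OrderClosedTopology M] [TopologicalSpace X]

theorem eventually_mem_range (h : SeparatesTriplesOn φ C) {f : X → A → M} {x : X}
    (hf : ∀ a, ContinuousAt (fun y => f y a) x) (hC : ∀ y a, f y a ∈ C)
    (hφ : ∀ y a b, φ (f y a) = φ (f y b)) {a b : A} (hab : f x a < f x b) :
    ∀ᶠ y in 𝓝 x, ∀ c, f y c ∈ range (f x) := by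
  filter_upwards [(hf a).eventually_lt continuousAt_const hab,
    continuousAt_const.eventually_lt (hf b) hab, (hf a).eventually_lt (hf b) hab]
    with y hay hyb hy c
  have ha : f y a = f x a := by
    rcases lt_trichotomy (f y a) (f x a) with hlt | heq | hlt
    · exact (h (hC y a) (hC x a) (hC y b) hlt hyb (hφ y a b)).elim
    · exact heq
    · exact (h (hC x a) (hC y a) (hC x b) hlt hay (hφ x a b)).elim
  have hb : f y b = f x b := by
    rcases lt_trichotomy (f y b) (f x b) with hlt | heq | hlt
    · exact (h (hC x a) (hC y b) (hC x b) hyb hlt (hφ x a b)).elim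
    · exact heq
    · exact (h (hC y a) (hC x b) (hC y b) hay hlt (hφ y a b)).elim
  rcases h.eq_or_eq (hC y a) (hC y b) (hC y c) (hφ y a b) (hφ y a c) hy.ne with e | e
  exacts [⟨a, by rw [e, ha]⟩, ⟨b, by rw [e, hb]⟩]

end SeparatesTriplesOn

variable [TopologicalSpace M]

theorem exists_countable_pairs_of_lt_lt [OrderClosedTopology M] (C : Set M) [SeparableSpace C] :
    ∃ P : Set (M × M), P.Countable ∧ (∀ p ∈ P, p.1 < p.2) ∧
      ∀ u ∈ C, ∀ v ∈ C, ∀ w ∈ C, u < v → v < w → ∃ p ∈ P, u ≤ p.1 ∧ p.2 ≤ w := by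
  obtain ⟨D, hDc, hD⟩ := exists_countable_dense C
  have exists_between {u v w : M} (hv : v ∈ C) (huv : u < v) (hvw : v < w) :
      ∃ d ∈ Subtype.val '' D, u < d ∧ d < w := by
    obtain ⟨d, hdD, hd⟩ := hD.exists_mem_open (isOpen_Ioo.preimage continuous_subtype_val)
      (⟨⟨v, hv⟩, huv, hvw⟩ : (Subtype.val ⁻¹' Ioo u w : Set C).Nonempty)
    exact ⟨d, mem_image_of_mem _ hdD, hd⟩
  let E : Set M := Subtype.val '' D
  have hEc : E.Countable := hDc.image _
  let jumps : Set (M × M) := {p | p.2 ∈ E ∧ IsGreatest (C ∩ Iio p.2) p.1}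
  have hjumps : jumps.Countable := by
    refine MapsTo.countable_of_injOn (f := Prod.snd) (fun p hp => hp.1) ?_ hEc
    rintro ⟨a, d⟩ ⟨-, ha⟩ ⟨a', -⟩ ⟨-, ha'⟩ rfl
    exact Prod.ext (ha.unique ha') rfl
  refine ⟨jumps ∪ {p ∈ E ×ˢ E | p.1 < p.2},
    hjumps.union ((hEc.prod hEc).mono (sep_subset _ _)), ?_, fun u hu v hv w _ huv hvw => ?_⟩
  · rintro p (⟨-, hp⟩ | ⟨-, hp⟩)
    exacts [hp.1.2, hp]
  obtain ⟨d, hdE, hud, hdw⟩ := exists_between hv huv hvw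
  by_cases hc : ∃ c ∈ C, u < c ∧ c < d
  · obtain ⟨c, hcC, huc, hcd⟩ := hc
    obtain ⟨d', hdE', hud', hdd'⟩ := exists_between hcC huc hcd
    exact ⟨(d', d), .inr ⟨⟨hdE', hdE⟩, hdd'⟩, hud'.le, hdw.le⟩
  · push Not at hc
    refine ⟨(u, d), .inl ⟨hdE, ⟨hu, hud⟩, fun c hcd => ?_⟩, le_rfl, hdw.le⟩
    exact le_of_not_gt fun huc => (hc c hcd.1 huc).not_gt hcd.2

theorem exists_separatesTriplesOn [OrderTopology M] (C : Set M) [SeparableSpace C] :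
    ∃ φ : C(M, ℕ → ℝ), SeparatesTriplesOn φ C := by
  obtain ⟨P, hPc, hPlt, hP⟩ := exists_countable_pairs_of_lt_lt C
  have urysohn (p : M × M) :
      ∃ f : C(M, ℝ), p.1 < p.2 → EqOn f 0 (Iic p.1) ∧ EqOn f 1 (Ici p.2) := by
    by_cases hp : p.1 < p.2
    · obtain ⟨f, hf0, hf1, -⟩ := exists_continuous_zero_one_of_isClosed isClosed_Iic isClosed_Ici
        (Iic_disjoint_Ici.2 hp.not_ge)
      exact ⟨f, fun _ => ⟨hf0, hf1⟩⟩
    · exact ⟨0, fun h => absurd h hp⟩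
  choose f hf using urysohn
  obtain ⟨e, he⟩ := countable_iff_exists_subset_range.1 (hPc.image f)
  refine ⟨ContinuousMap.pi e, fun u hu v hv w hw huv hvw heq => ?_⟩
  obtain ⟨p, hp, hup, hpw⟩ := hP u hu v hv w hw huv hvw
  obtain ⟨n, hn⟩ := he (mem_image_of_mem f hp)
  obtain ⟨hf0, hf1⟩ := hf p (hPlt p hp)
  have hfuw : f p u = f p w := hn ▸ congrFun heq n
  rw [hf0 hup, hf1 hpw] at hfuw
  exact zero_ne_one hfuw

end Triples

section Cubes

theorem apply_eq_of_forall_update_eq {K Y : Type*} [Finite K] [DecidableEq K] {L : K → Type*}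
    {F : (∀ k, L k) → Y} {S : ∀ k, Set (L k)}
    (hF : ∀ z ∈ univ.pi S, ∀ k, ∀ l ∈ S k, F (update z k l) = F z) {z z' : ∀ k, L k}
    (hz : z ∈ univ.pi S) (hz' : z' ∈ univ.pi S) : F z = F z' := by
  have := Fintype.ofFinite K
  suffices ∀ s : Finset K, F (s.piecewise z' z) = F z by
    rw [← this Finset.univ, Finset.piecewise_univ]
  intro s
  induction s using Finset.induction_on with
  | empty => rw [Finset.piecewise_empty]
  | insert k s _ ih =>
    rw [Finset.piecewise_insert, hF _ ?_ k _ (hz' k trivial), ih]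
    exact fun j _ => s.piecewise_cases z' z (· ∈ S j) (hz' j trivial) (hz j trivial)

theorem exists_finset_card_eq_two_pow_apply_eq {X Y K : Type*} [TopologicalSpace X] [CompactSpace X]
    [TopologicalSpace Y] [MetrizableSpace Y] [Fintype K] {L : K → Type*}
    [∀ k, LinearOrder (L k)] [∀ k, TopologicalSpace (L k)] [∀ k, OrderTopology (L k)]
    [∀ k, CompactSpace (L k)] [∀ k, SeparableSpace (L k)]
    (hL : ∀ k, ¬ SecondCountableTopology (L k)) {f : X → (∀ k, L k) → Y}
    (hf : Continuous (uncurry f)) :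
    ∃ Q : Finset (∀ k, L k), Q.card = 2 ^ Fintype.card K ∧
      ∀ x, ∀ z ∈ Q, ∀ z' ∈ Q, f x z = f x z' := by
  classical
  have exists_jump (k : K) :
      ∃ a b : L k, a ⋖ b ∧ ∀ x z, f x (update z k a) = f x (update z k b) := by
    have hcont : Continuous (uncurry fun (l : L k) (p : X × ∀ k, L k) => f p.1 (update p.2 k l)) :=
      hf.comp (continuous_snd.fst.prodMk (continuous_snd.snd.update k continuous_fst))
    obtain ⟨a, b, hab, heq⟩ := exists_covBy_eq_of_not_secondCountableTopology (hL k) hcont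
    exact ⟨a, b, hab, fun x z => congrFun heq (x, z)⟩
  choose a b hab heq using exists_jump
  refine ⟨Fintype.piFinset fun k => {a k, b k}, ?_, fun x z hz z' hz' => ?_⟩
  · simp_rw [Fintype.card_piFinset, Finset.card_pair (hab _).ne, Finset.prod_const,
      Finset.card_univ]
  refine apply_eq_of_forall_update_eq (S := fun k => {a k, b k}) (fun z hz k l hl => ?_)
    (by simpa using hz) (by simpa using hz')
  have update_eq : ∀ l ∈ ({a k, b k} : Set (L k)), f x (update z k l) = f x (update z k (a k)) := by
    rintro _ (rfl | rfl)
    exacts [rfl, (heq k x z).symm]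
  rw [update_eq l hl, ← update_eq (z k) (hz k trivial), update_eq_self]

theorem card_image_eq_two_and_eq_piFinset {ι : Type*} [Fintype ι] [DecidableEq ι] {M : ι → Type*}
    [∀ i, DecidableEq (M i)] {S : Finset (∀ i, M i)}
    (hle : ∀ i, (S.image fun z => z i).card ≤ 2) (hS : 2 ^ Fintype.card ι ≤ S.card) :
    (∀ i, (S.image fun z => z i).card = 2) ∧
      S = Fintype.piFinset fun i => S.image fun z => z i := by
  have hsub : S ⊆ Fintype.piFinset fun i => S.image fun z => z i :=
    fun z hz => Fintype.mem_piFinset.2 fun i => Finset.mem_image_of_mem _ hz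
  have hne : S.Nonempty := Finset.card_pos.1 ((pow_pos two_pos _).trans_le hS)
  have hprod : ∏ _i : ι, 2 ≤ ∏ i, (S.image fun z => z i).card := by
    rw [← Fintype.card_piFinset, Finset.prod_const, Finset.card_univ]
    exact hS.trans (Finset.card_le_card hsub)
  have hcard : ∀ i, (S.image fun z => z i).card = 2 := by
    by_contra! h
    obtain ⟨i, hi⟩ := h
    exact hprod.not_gt (Finset.prod_lt_prod (fun i _ => (hne.image _).card_pos) (fun i _ => hle i)
      ⟨i, Finset.mem_univ i, (hle i).lt_of_ne hi⟩)
  refine ⟨hcard, Finset.eq_of_subset_of_card_le hsub ?_⟩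
  simpa only [Fintype.card_piFinset, hcard, Finset.prod_const, Finset.card_univ] using hS

theorem eventually_forall_mem_range_of_two_pow_card_le {A X ι : Type*}
    [TopologicalSpace X] [Fintype A] [Fintype ι] {M Y : ι → Type*} [∀ i, LinearOrder (M i)]
    [∀ i, TopologicalSpace (M i)] [∀ i, OrderClosedTopology (M i)] {φ : ∀ i, M i → Y i}
    {C : ∀ i, Set (M i)} (hφ : ∀ i, SeparatesTriplesOn (φ i) (C i))
    {f : X → A → ∀ i, M i} {x : X} (hf : ∀ a i, ContinuousAt (fun y => f y a i) x)
    (hC : ∀ y a i, f y a i ∈ C i) (hφf : ∀ y a b i, φ i (f y a i) = φ i (f y b i))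
    (hinj : Injective (f x)) (hA : 2 ^ Fintype.card ι ≤ Fintype.card A) :
    ∀ᶠ y in 𝓝 x, ∀ a, f y a ∈ range (f x) := by
  classical
  let S := Finset.univ.image (f x)
  have mem_image_iff (i : ι) {u : M i} :
      u ∈ S.image (fun z => z i) ↔ ∃ a, f x a i = u := by simp [S]
  have card_image_le (i : ι) : (S.image fun z => z i).card ≤ 2 := by
    refine (hφ i).card_le_two (fun u hu => ?_) fun u hu v hv => ?_
    · obtain ⟨a, rfl⟩ := (mem_image_iff i).1 hu
      exact hC x a i
    · obtain ⟨a, rfl⟩ := (mem_image_iff i).1 hu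
      obtain ⟨b, rfl⟩ := (mem_image_iff i).1 hv
      exact hφf x a b i
  obtain ⟨htwo, hbox⟩ := card_image_eq_two_and_eq_piFinset card_image_le
    (hA.trans_eq (Finset.card_image_of_injective _ hinj).symm)
  have eventually_coord (i : ι) : ∀ᶠ y in 𝓝 x, ∀ a, f y a i ∈ S.image fun z => z i := by
    obtain ⟨u, hu, v, hv, huv⟩ :=
      (Finset.one_lt_card_iff_nontrivial.1 (htwo i ▸ one_lt_two)).exists_lt
    obtain ⟨a, rfl⟩ := (mem_image_iff i).1 hu
    obtain ⟨b, rfl⟩ := (mem_image_iff i).1 hv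
    filter_upwards [(hφ i).eventually_mem_range (f := fun y a => f y a i) (fun a => hf a i)
      (fun y a => hC y a i) (fun y a b => hφf y a b i) huv] with y hy c
    exact (mem_image_iff i).2 (hy c)
  filter_upwards [eventually_all.2 eventually_coord] with y hy a
  have hyS : f y a ∈ S := hbox ▸ Fintype.mem_piFinset.2 fun i => hy i a
  simpa [S] using hyS

end Cubes

section CompactProducts

variable {J K ι X : Type*} [Fintype J] [Fintype K] [Fintype ι] [TopologicalSpace X]
  {M : ι → Type*} [∀ i, LinearOrder (M i)] [∀ i, TopologicalSpace (M i)] [∀ i, OrderTopology (M i)]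

theorem card_lt_card_of_continuous_injective [CompactSpace X] [SeparableSpace X] [Infinite X]
    {L : K → Type*} [∀ k, LinearOrder (L k)] [∀ k, TopologicalSpace (L k)]
    [∀ k, OrderTopology (L k)] [∀ k, CompactSpace (L k)] [∀ k, SeparableSpace (L k)]
    (hL : ∀ k, ¬ SecondCountableTopology (L k)) {g : X × (∀ k, L k) → ∀ i, M i}
    (hg : Continuous g) (hinj : Injective g) : Fintype.card K < Fintype.card ι := by
  have hgi (i : ι) : Continuous fun p => g p i := (continuous_apply i).comp hg
  have (i : ι) : SeparableSpace (range fun p => g p i) :=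
    rangeFactorization_surjective.denseRange.separableSpace (hgi i).rangeFactorization
  choose φ hφ using fun i => exists_separatesTriplesOn (range fun p => g p i)
  obtain ⟨Q, hQcard, hQ⟩ := exists_finset_card_eq_two_pow_apply_eq hL
    (f := fun x z i => φ i (g (x, z) i))
    (continuous_pi fun i => (φ i).continuous.comp (hgi i))
  obtain ⟨x, hx⟩ := exists_nhds_ne_neBot X
  by_contra! hcard
  have hnear : ∀ᶠ y in 𝓝 x, ∀ z : Q, g (y, z) ∈ range fun w : Q => g (x, w) :=
    eventually_forall_mem_range_of_two_pow_card_le (f := fun y (z : Q) => g (y, z)) hφ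
      (fun z i => ((hgi i).comp (.prodMk_left z.1)).continuousAt)
      (fun y z i => mem_range_self (y, z.1))
      (fun y z w i => congrFun (hQ y z z.2 w w.2) i)
      (hinj.comp ((Prod.mk_right_injective x).comp Subtype.val_injective))
      (by simpa [hQcard] using Nat.pow_le_pow_right two_pos hcard)
  obtain ⟨y, hy, hyx⟩ :=
    ((hnear.filter_mono nhdsWithin_le_nhds).and (eventually_mem_nhdsWithin (s := {x}ᶜ))).exists
  obtain ⟨z, hz⟩ := Finset.card_pos.1 (hQcard ▸ pow_pos two_pos _)
  obtain ⟨w, heq⟩ := hy ⟨z, hz⟩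
  exact hyx (congrArg Prod.fst (hinj heq)).symm

theorem card_le_card_of_continuous_injective {L : J → Type*} [∀ j, LinearOrder (L j)]
    [∀ j, TopologicalSpace (L j)] [∀ j, OrderTopology (L j)] [∀ j, CompactSpace (L j)]
    [∀ j, SeparableSpace (L j)] (j₀ : J) [Infinite (L j₀)]
    (hL : ∀ j ≠ j₀, ¬ SecondCountableTopology (L j)) {g : (∀ j, L j) → ∀ i, M i}
    (hg : Continuous g) (hinj : Injective g) : Fintype.card J ≤ Fintype.card ι := by
  classical
  let e := (Homeomorph.piSplitAt j₀ L).symm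
  have hlt : Fintype.card {j // j ≠ j₀} < Fintype.card ι :=
    card_lt_card_of_continuous_injective (fun k => hL k k.2) (hg.comp e.continuous)
      (hinj.comp e.injective)
  rw [Fintype.card_subtype_compl, Fintype.card_subtype_eq] at hlt
  omega

end CompactProducts

section Localization

theorem separableSpace_of_countable_sdiff_interior {X : Type*} [TopologicalSpace X]
    [SeparableSpace X] {s : Set X} (hs : (s \ interior s).Countable) : SeparableSpace s := by
  obtain ⟨D, hDc, hD⟩ := exists_countable_dense X
  refine ⟨⟨Subtype.val ⁻¹' (D ∪ (s \ interior s)),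
    (hDc.union hs).preimage Subtype.val_injective, ?_⟩⟩
  rw [dense_iff_inter_open]
  rintro _ ⟨V, hV, rfl⟩ ⟨x, hxV⟩
  by_cases hx : x.1 ∈ interior s
  · obtain ⟨d, hdD, hdV, hds⟩ := hD.exists_mem_open (hV.inter isOpen_interior) ⟨x.1, hxV, hx⟩
    exact ⟨⟨d, interior_subset hds⟩, hdV, .inl hdD⟩
  · exact ⟨x, hxV, .inr ⟨x.2, hx⟩⟩

theorem separableSpace_Icc {L : Type*} [LinearOrder L] [TopologicalSpace L] [OrderTopology L]
    [SeparableSpace L] (a b : L) : SeparableSpace (Icc a b) := by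
  refine separableSpace_of_countable_sdiff_interior ((Set.toFinite {a, b}).countable.mono ?_)
  have hIoo : Ioo a b ⊆ interior (Icc a b) := interior_maximal Ioo_subset_Icc_self isOpen_Ioo
  exact fun x ⟨hx, hxI⟩ => by
    have : ¬ (a < x ∧ x < b) := fun h => hxI (hIoo h)
    grind

theorem exists_isCompact_Icc_mem_nhds_subset {L : Type*} [LinearOrder L] [TopologicalSpace L]
    [OrderTopology L] [LocallyCompactSpace L] {x : L} {s : Set L} (hs : s ∈ 𝓝 x) :
    ∃ a b, Icc a b ∈ 𝓝 x ∧ Icc a b ⊆ s ∧ IsCompact (Icc a b) := by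
  obtain ⟨C, hC, hCs, hCc⟩ := local_compact_nhds hs
  obtain ⟨a, b, -, hab, habC⟩ := exists_Icc_mem_subset_of_mem_nhds hC
  exact ⟨a, b, hab, habC.trans hCs, hCc.of_isClosed_subset isClosed_Icc habC⟩

theorem exists_univ_pi_subset_of_mem_nhds {J : Type*} {X : J → Type*}
    [∀ j, TopologicalSpace (X j)] {x : ∀ j, X j} {t : Set (∀ j, X j)} (ht : t ∈ 𝓝 x) :
    ∃ s : ∀ j, Set (X j), (∀ j, s j ∈ 𝓝 (x j)) ∧ univ.pi s ⊆ t := by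
  rw [nhds_pi, Filter.mem_pi'] at ht
  obtain ⟨I, s, hs, hst⟩ := ht
  exact ⟨s, hs, (pi_mono' (fun _ _ => Subset.rfl) (subset_univ _)).trans hst⟩

variable {J ι : Type*} [Fintype J] [Fintype ι] {L : J → Type*} [∀ j, LinearOrder (L j)]
  [∀ j, TopologicalSpace (L j)] [∀ j, OrderTopology (L j)] [∀ j, LocallyCompactSpace (L j)]
  [∀ j, SeparableSpace (L j)] {M : ι → Type*} [∀ i, LinearOrder (M i)]
  [∀ i, TopologicalSpace (M i)] [∀ i, OrderTopology (M i)]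

theorem card_le_card_of_mem_nhds {x : ∀ j, L j} {t : Set (∀ j, L j)} (ht : t ∈ 𝓝 x) (j₀ : J)
    [(𝓝[≠] x j₀).NeBot] (hx : ∀ j ≠ j₀, ∀ s ∈ 𝓝 (x j), ¬ SecondCountableTopology s)
    {g : t → ∀ i, M i} (hg : Continuous g) (hinj : Injective g) :
    Fintype.card J ≤ Fintype.card ι := by
  obtain ⟨s, hs, hst⟩ := exists_univ_pi_subset_of_mem_nhds ht
  choose a b hab habs hcpt using fun j => exists_isCompact_Icc_mem_nhds_subset (hs j)
  have (j : J) : CompactSpace (Icc (a j) (b j)) := isCompact_iff_compactSpace.1 (hcpt j)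
  have (j : J) : SeparableSpace (Icc (a j) (b j)) := separableSpace_Icc _ _
  have : Infinite (Icc (a j₀) (b j₀)) := (infinite_of_mem_nhds (x j₀) (hab j₀)).to_subtype
  let box : (∀ j, Icc (a j) (b j)) → t :=
    fun z => ⟨fun j => z j, hst fun j _ => habs j (z j).2⟩
  have hbox : Continuous box :=
    (continuous_pi fun j => continuous_subtype_val.comp (continuous_apply j)).subtype_mk _
  have box_injective : Injective box := fun z w h =>
    funext fun j => Subtype.ext (congrFun (congrArg Subtype.val h) j)
  exact card_le_card_of_continuous_injective j₀ (fun j hj => hx j hj _ (hab j)) (hg.comp hbox)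
    (hinj.comp box_injective)

end Localization

section Dimension

variable {J : Type} {L : J → Type} [∀ j, LinearOrder (L j)] [∀ j, TopologicalSpace (L j)]
  [∀ j, OrderTopology (L j)]

theorem EmbedsInLOTSProd.of_subset_pi (t : Set (∀ j, L j)) :
    EmbedsInLOTSProd t (Cardinal.mk J) :=
  ⟨J, L, inferInstance, inferInstance, inferInstance, rfl, Subtype.val, .subtypeVal⟩

theorem embedsInLOTSProd_Ldim0 {X : Type} [TopologicalSpace X] {κ : Cardinal.{0}}
    (h : EmbedsInLOTSProd X κ) : EmbedsInLOTSProd X (Ldim0 X) :=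
  csInf_mem (s := {κ | EmbedsInLOTSProd X κ}) ⟨κ, h⟩

theorem mk_le_Ldim0_of_mem_nhds [Finite J] [∀ j, LocallyCompactSpace (L j)]
    [∀ j, SeparableSpace (L j)] {x : ∀ j, L j} {t : Set (∀ j, L j)} (ht : t ∈ 𝓝 x) (j₀ : J)
    [(𝓝[≠] x j₀).NeBot] (hx : ∀ j ≠ j₀, ∀ s ∈ 𝓝 (x j), ¬ SecondCountableTopology s) :
    Cardinal.mk J ≤ Ldim0 t := by
  obtain ⟨ι, M, lin, top, hord, hι, e, he⟩ :=
    embedsInLOTSProd_Ldim0 (EmbedsInLOTSProd.of_subset_pi t)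
  rw [← hι]
  have := Fintype.ofFinite J
  rcases finite_or_infinite ι with hfin | hinf
  · have := Fintype.ofFinite ι
    simpa using card_le_card_of_mem_nhds ht j₀ hx he.continuous he.injective
  · exact (Cardinal.lt_aleph0_of_finite J).le.trans (Cardinal.aleph0_le_mk ι)

theorem exists_forall_mem_nhds_mk_le_Ldim0 [Finite J] [Nonempty J] [∀ j, LocallyCompactSpace (L j)]
    [∀ j, SeparableSpace (L j)] (hL : ∀ j, ¬ DiscreteTopology (L j))
    (hsc : ∀ j k, SecondCountableTopology (L j) → SecondCountableTopology (L k) → j = k) :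
    ∃ x : ∀ j, L j, ∀ t ∈ 𝓝 x, Cardinal.mk J ≤ Ldim0 t := by
  classical
  obtain ⟨j₀, hj₀⟩ : ∃ j₀, ∀ j ≠ j₀, ¬ SecondCountableTopology (L j) := by
    by_cases h : ∃ j, SecondCountableTopology (L j)
    · obtain ⟨j₀, hj₀⟩ := h
      exact ⟨j₀, fun j hj hscj => hj (hsc j j₀ hscj hj₀)⟩
    · push Not at h
      exact ⟨Classical.arbitrary J, fun j _ => h j⟩
  obtain ⟨x₀, hx₀⟩ : ∃ x₀ : L j₀, (𝓝[≠] x₀).NeBot := by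
    simpa only [discreteTopology_iff_nhds_ne, not_forall, ← neBot_iff] using hL j₀
  have exists_point (j : J) : ∃ x : L j, j ≠ j₀ → ∀ s ∈ 𝓝 x, ¬ SecondCountableTopology s := by
    by_cases hj : j = j₀
    · exact ⟨hj ▸ x₀, fun h => absurd hj h⟩
    · obtain ⟨x, hx⟩ := exists_forall_mem_nhds_not_secondCountableTopology (hj₀ j hj)
      exact ⟨x, fun _ => hx⟩
  choose x hx using exists_point
  have : (𝓝[≠] update x j₀ x₀ j₀).NeBot := by rwa [update_self]
  refine ⟨update x j₀ x₀, fun t ht => mk_le_Ldim0_of_mem_nhds ht j₀ fun j hj => ?_⟩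
  rw [update_of_ne hj]
  exact hx j hj

theorem stmt14_general [Finite J] [∀ j, LocallyCompactSpace (L j)] [∀ j, SeparableSpace (L j)]
    (hL : ∀ j, ¬ DiscreteTopology (L j))
    (hsc : ∀ j k, SecondCountableTopology (L j) → SecondCountableTopology (L k) → j = k) :
    Ldim (∀ j, L j) = Cardinal.mk J := by
  have hle : ∀ x : ∀ j, L j, ∃ U ∈ 𝓝 x, Ldim0 (closure U) ≤ Cardinal.mk J :=
    fun x => ⟨univ, univ_mem, csInf_le' (EmbedsInLOTSProd.of_subset_pi _)⟩
  refine le_antisymm (csInf_le' hle) (le_csInf ⟨_, hle⟩ fun κ hκ => ?_)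
  rcases isEmpty_or_nonempty J with hJ | hJ
  · simp
  obtain ⟨x, hx⟩ := exists_forall_mem_nhds_mk_le_Ldim0 hL hsc
  obtain ⟨U, hU, hUκ⟩ := hκ x
  exact (hx _ (mem_of_superset hU subset_closure)).trans hUκ

end Dimension

theorem isScatteredSet_of_discreteTopology {X : Type*} [TopologicalSpace X] [DiscreteTopology X]
    (S : Set X) : IsScatteredSet S :=
  fun _ _ ⟨x, hx⟩ => ⟨x, hx, {x}, isOpen_discrete _, inter_eq_left.2 (singleton_subset_iff.2 hx)⟩

/-- If `L_j` (j < n) are compact separable non-scattered LOTSes with at most one of them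
second countable, then `Ldim (∏_{j<n} L_j) = n`. -/
theorem stmt14 (n : ℕ) (L : Fin n → Type)
    [∀ j, LinearOrder (L j)] [∀ j, TopologicalSpace (L j)] [∀ j, OrderTopology (L j)]
    [∀ j, CompactSpace (L j)] [∀ j, TopologicalSpace.SeparableSpace (L j)]
    (hns : ∀ j, ¬ IsScatteredSet (Set.univ : Set (L j)))
    (hsc : ∀ j k, SecondCountableTopology (L j) → SecondCountableTopology (L k) → j = k) :
    Ldim (∀ j, L j) = (n : Cardinal.{0}) := by
  simpa using stmt14_general (fun j _ => hns j (isScatteredSet_of_discreteTopology univ)) hsc
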